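/- (Correctness of the non-local box protocol) Let a, b ∈ S² be unit vectors, let λ₀, λ₁ be independent uniform on S², and let γ be a uniform bit in {0, 1} independent of (λ₀, λ₁). Define x = 0 if |a·λ₁| ≤ |a·λ₀| and x = 1 otherwise; y = 0 if sgn(b·λ₀) = sgn(b·λ₁) and y = 1 otherwise; λ_x = λ₀ if x = 0 and λ_x = λ₁ if x = 1; β = γ ⊕ (x ∧ y); A = -sgn(a·((-1)^γ λ_x)); and B = sgn(b·((-1)^β λ₀)). Then for all α', β' ∈ {-1, 1}, P(A = α' and B = β') = (1 - α'β' a·b)/4; in particular E(AB) = -a·b and E(A) = E(B) = 0, so the singlet correlations are simulated using shared randomness and one use of a PR non-local box. -/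

import Mathlib

open MeasureTheory Metric
open scoped RealInnerProductSpace ENNReal

/-- The unit sphere in ℝ³. -/
noncomputable abbrev Sphere2 := Metric.sphere (0 : EuclideanSpace ℝ (Fin 3)) 1

/-- The surface measure `σ` on the unit sphere of ℝ³ (total mass `4π`). -/
noncomputable def sphereMeasure : Measure Sphere2 :=
  (volume : Measure (EuclideanSpace ℝ (Fin 3))).toSphere

/-- The uniform probability measure `σ/(4π)` on the unit sphere of ℝ³. -/
noncomputable def uniformSphere : Measure Sphere2 :=
  (ENNReal.ofReal (4 * Real.pi))⁻¹ • sphereMeasure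

/-- A fair coin: the uniform distribution on `{0, 1}`. -/
noncomputable def coin : Measure Bool := (PMF.uniformOfFintype Bool).toMeasure

/-- The joint distribution of two independent uniform points `λ₀, λ₁` on `S²` and an
independent uniform bit `γ` (Alice's output bit of the PR non-local box). -/
noncomputable def nlMeasure : Measure ((Sphere2 × Sphere2) × Bool) :=
  (uniformSphere.prod uniformSphere).prod coin

/-- `sgn(x) = 1` if `x ≥ 0`, `-1` if `x < 0`. -/
noncomputable def sgn (x : ℝ) : ℝ := if 0 ≤ x then 1 else -1

/-- Alice's box input: `x = 0` iff `|a·λ₁| ≤ |a·λ₀|` (the choice method). -/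
noncomputable def boxX (a : EuclideanSpace ℝ (Fin 3)) (p : Sphere2 × Sphere2) : Bool :=
  if |⟪a, (p.2 : EuclideanSpace ℝ (Fin 3))⟫| ≤ |⟪a, (p.1 : EuclideanSpace ℝ (Fin 3))⟫|
  then false else true

/-- Bob's box input: `y = 0` iff `sgn(b·λ₀) = sgn(b·λ₁)`. -/
noncomputable def boxY (b : EuclideanSpace ℝ (Fin 3)) (p : Sphere2 × Sphere2) : Bool :=
  if sgn ⟪b, (p.1 : EuclideanSpace ℝ (Fin 3))⟫ = sgn ⟪b, (p.2 : EuclideanSpace ℝ (Fin 3))⟫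
  then false else true

/-- The vector accepted by the choice method: `λ_x = λ₀` if `x = 0`, `λ₁` if `x = 1`. -/
noncomputable def lamX (a : EuclideanSpace ℝ (Fin 3)) (p : Sphere2 × Sphere2) :
    EuclideanSpace ℝ (Fin 3) :=
  if boxX a p then (p.2 : EuclideanSpace ℝ (Fin 3)) else (p.1 : EuclideanSpace ℝ (Fin 3))

/-- Alice's output `A = -sgn(a·((-1)^γ λ_x))`. -/
noncomputable def outA (a : EuclideanSpace ℝ (Fin 3)) (q : (Sphere2 × Sphere2) × Bool) : ℝ :=
  -sgn ⟪a, ((-1 : ℝ) ^ q.2.toNat) • lamX a q.1⟫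

/-- Bob's output `B = sgn(b·((-1)^β λ₀))` with `β = γ ⊕ (x ∧ y)`. -/
noncomputable def outB (a b : EuclideanSpace ℝ (Fin 3)) (q : (Sphere2 × Sphere2) × Bool) : ℝ :=
  sgn ⟪b, ((-1 : ℝ) ^ (xor q.2 (boxX a q.1 && boxY b q.1)).toNat) •
    (q.1.1 : EuclideanSpace ℝ (Fin 3))⟫

/-! Keeping, of two independent uniform points, the one at which `|a·λ|` is larger gives `λ_x` the
density `2|a·λ|` with respect to the uniform distribution, because `|a·λ|` is uniform on `[0, 1]` by
Archimedes' hat-box theorem. The bit `x ∧ y` of the box turns Bob's `sgn (b·λ₀)` into `sgn (b·λ_x)`,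
so `E(AB) = -2 ∫ |a·λ| sgn (a·λ) sgn (b·λ) = -2 ∫ (a·λ) sgn (b·λ) = -a·b`, the last step by
averaging over the reflection in the line `ℝb`. The bit `γ` makes `A` and `B` centred, and the joint
law of two signs is determined by `E(A)`, `E(B)` and `E(AB)`. -/

lemma eq_restrict_Ico_of_Iio {ν : Measure ℝ} [IsProbabilityMeasure ν]
    (hν : ∀ t ∈ Set.Icc (0 : ℝ) 1, ν (Set.Iio t) = ENNReal.ofReal t) :
    ν = volume.restrict (Set.Ico 0 1) := by
  have : IsProbabilityMeasure (volume.restrict (Set.Ico (0 : ℝ) 1)) := ⟨by simp⟩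
  have hcdf (t : ℝ) : ν (Set.Iio t) = ENNReal.ofReal (min 1 t) := by
    rcases le_total t 0 with h0 | h0
    · rw [ENNReal.ofReal_of_nonpos (min_le_of_right_le h0)]
      exact measure_mono_null (Set.Iio_subset_Iio h0) (by simpa using hν 0 (by simp))
    rcases le_total t 1 with h1 | h1
    · rw [hν t ⟨h0, h1⟩, min_eq_right h1]
    · rw [min_eq_left h1, ENNReal.ofReal_one]
      exact prob_le_one.antisymm
        ((by simpa using (hν 1 (by simp)).ge : 1 ≤ ν (Set.Iio 1)).trans
          (measure_mono (Set.Iio_subset_Iio h1)))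
  refine Measure.ext_of_Ici _ _ fun t => ?_
  rw [← Set.compl_Iio, prob_compl_eq_one_sub measurableSet_Iio,
    prob_compl_eq_one_sub measurableSet_Iio, hcdf, Measure.restrict_apply measurableSet_Iio,
    Set.inter_comm, Set.Ico_inter_Iio, Real.volume_Ico, sub_zero]

/-- The choice method of the protocol: of two points, keep the one at which `h` is larger, the first
one in case of a tie. -/
def choiceMethod {X α : Type*} [LinearOrder α] (h : X → α) (p : X × X) : X :=
  if h p.2 ≤ h p.1 then p.1 else p.2

section ChoiceMethod

variable {X : Type*} [MeasurableSpace X] {μ : Measure X}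

section LinearOrder

variable {α : Type*} [LinearOrder α] [TopologicalSpace α] [OrderClosedTopology α]
  [SecondCountableTopology α] [MeasurableSpace α] [OpensMeasurableSpace α] {h : X → α}

lemma measurable_choiceMethod (hh : Measurable h) : Measurable (choiceMethod h) :=
  Measurable.ite (measurableSet_le (hh.comp measurable_snd) (hh.comp measurable_fst))
    measurable_fst measurable_snd

theorem map_choiceMethod_prod [SFinite μ] (hh : Measurable h) :
    (μ.prod μ).map (choiceMethod h)
      = μ.withDensity fun x => μ {y | h y ≤ h x} + μ {y | h y < h x} := by
  ext s hs
  have hle : MeasurableSet {p : X × X | h p.2 ≤ h p.1} :=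
    measurableSet_le (hh.comp measurable_snd) (hh.comp measurable_fst)
  have hlt : MeasurableSet {p : X × X | h p.1 < h p.2} :=
    measurableSet_lt (hh.comp measurable_fst) (hh.comp measurable_snd)
  have hpre : choiceMethod h ⁻¹' s = {p | h p.2 ≤ h p.1} ∩ Prod.fst ⁻¹' s ∪
      {p | h p.1 < h p.2} ∩ Prod.snd ⁻¹' s := by
    ext p
    by_cases hp : h p.2 ≤ h p.1
    · simp [choiceMethod, hp, hp.not_gt]
    · simp [choiceMethod, hp, not_le.1 hp]
  have hdisj : Disjoint ({p | h p.2 ≤ h p.1} ∩ Prod.fst ⁻¹' s : Set (X × X))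
      ({p | h p.1 < h p.2} ∩ Prod.snd ⁻¹' s) :=
    Set.disjoint_left.2 fun p hp hp' => hp.1.not_gt hp'.1
  have hfst : (μ.prod μ) ({p | h p.2 ≤ h p.1} ∩ Prod.fst ⁻¹' s)
      = ∫⁻ x in s, μ {y | h y ≤ h x} ∂μ := by
    rw [← Measure.restrict_apply' (measurable_fst hs), ← Set.prod_univ, ← Measure.prod_restrict,
      Measure.restrict_univ, Measure.prod_apply hle]
    rfl
  have hsnd : (μ.prod μ) ({p | h p.1 < h p.2} ∩ Prod.snd ⁻¹' s)
      = ∫⁻ y in s, μ {x | h x < h y} ∂μ := by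
    rw [← Measure.restrict_apply' (measurable_snd hs), ← Set.univ_prod, ← Measure.prod_restrict,
      Measure.restrict_univ, Measure.prod_apply_symm hlt]
    rfl
  rw [Measure.map_apply (measurable_choiceMethod hh) hs, hpre,
    measure_union hdisj (hlt.inter (measurable_snd hs)), hfst, hsnd, withDensity_apply _ hs]
  exact (lintegral_add_left (measurable_measure_prodMk_left hle) _).symm

end LinearOrder

theorem map_choiceMethod_prod_of_uniform [SFinite μ] {h : X → ℝ} (hh : Measurable h)
    (hμ : μ.map h = volume.restrict (Set.Ico 0 1)) :
    (μ.prod μ).map (choiceMethod h) = μ.withDensity fun x => ENNReal.ofReal (2 * h x) := by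
  have hmem : ∀ᵐ x ∂μ, h x ∈ Set.Ico (0 : ℝ) 1 :=
    ae_of_ae_map hh.aemeasurable (hμ ▸ ae_restrict_mem measurableSet_Ico)
  rw [map_choiceMethod_prod hh]
  refine withDensity_congr_ae ?_
  filter_upwards [hmem] with x hx
  have hlt : μ {y | h y < h x} = ENNReal.ofReal (h x) := by
    change μ (h ⁻¹' Set.Iio (h x)) = _
    rw [← Measure.map_apply hh measurableSet_Iio, hμ, Measure.restrict_apply measurableSet_Iio,
      Set.inter_comm, Set.Ico_inter_Iio, min_eq_right hx.2.le, Real.volume_Ico, sub_zero]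
  have hle : μ {y | h y ≤ h x} = ENNReal.ofReal (h x) := by
    rw [← hlt]
    change μ (h ⁻¹' Set.Iic (h x)) = μ (h ⁻¹' Set.Iio (h x))
    rw [← Measure.map_apply hh measurableSet_Iic, ← Measure.map_apply hh measurableSet_Iio, hμ,
      measure_congr Iio_ae_eq_Iic]
  rw [hlt, hle, ← two_mul, ENNReal.ofReal_mul zero_le_two, ENNReal.ofReal_ofNat]

end ChoiceMethod

lemma measure_setOf_eq_and_eq_of_sign {Ω : Type*} [MeasurableSpace Ω] {μ : Measure Ω}
    [IsProbabilityMeasure μ] {A B : Ω → ℝ} (hAm : Measurable A) (hBm : Measurable B)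
    (hA : ∀ ω, A ω = 1 ∨ A ω = -1) (hB : ∀ ω, B ω = 1 ∨ B ω = -1) {α β : ℝ}
    (hα : α = 1 ∨ α = -1) (hβ : β = 1 ∨ β = -1) :
    μ {ω | A ω = α ∧ B ω = β} = ENNReal.ofReal
      ((1 + α * ∫ ω, A ω ∂μ + β * ∫ ω, B ω ∂μ + α * β * ∫ ω, A ω * B ω ∂μ) / 4) := by
  have hset : MeasurableSet {ω | A ω = α ∧ B ω = β} :=
    (hAm (measurableSet_singleton α)).inter (hBm (measurableSet_singleton β))
  have hindicator : {ω | A ω = α ∧ B ω = β}.indicator 1 =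
      fun ω => (1 + α * A ω + β * B ω + α * β * (A ω * B ω)) / 4 := by
    ext ω
    rcases hA ω with hAω | hAω <;> rcases hB ω with hBω | hBω <;>
    rcases hα with rfl | rfl <;> rcases hβ with rfl | rfl <;>
    norm_num [Set.indicator, hAω, hBω]
  have hiA : Integrable A μ := .of_bound hAm.aestronglyMeasurable 1
    (.of_forall fun ω => by rcases hA ω with h | h <;> simp [h])
  have hiB : Integrable B μ := .of_bound hBm.aestronglyMeasurable 1
    (.of_forall fun ω => by rcases hB ω with h | h <;> simp [h])
  have hiAB : Integrable (fun ω => A ω * B ω) μ :=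
    hiB.bdd_mul (c := 1) hAm.aestronglyMeasurable
      (.of_forall fun ω => by rcases hA ω with h | h <;> simp [h])
  rw [← ofReal_measureReal, ← integral_indicator_one hset, hindicator, integral_div,
    integral_add (by fun_prop) (by fun_prop), integral_add (by fun_prop) (by fun_prop),
    integral_add (by fun_prop) (by fun_prop)]
  simp [integral_const_mul]

/-- The homeomorphism of the unit sphere induced by a linear isometry of the ambient space. -/
def unitSphereHomeomorph {E : Type*} [NormedAddCommGroup E] [NormedSpace ℝ E] (g : E ≃ₗᵢ[ℝ] E) :
    sphere (0 : E) 1 ≃ₜ sphere (0 : E) 1 :=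
  g.toHomeomorph.subtype fun z => by simp

@[simp]
lemma coe_unitSphereHomeomorph {E : Type*} [NormedAddCommGroup E] [NormedSpace ℝ E]
    (g : E ≃ₗᵢ[ℝ] E) (l : sphere (0 : E) 1) : (unitSphereHomeomorph g l : E) = g l :=
  rfl

section ToSphere

open scoped Pointwise

variable {E : Type*} [NormedAddCommGroup E] [NormedSpace ℝ E] [MeasurableSpace E] [BorelSpace E]

lemma toSphere_preimage_coe_of_cone (μ : Measure E) {C : Set E} (hC : MeasurableSet C)
    (h0 : 0 ∉ C) (hcone : ∀ r : ℝ, 0 < r → ∀ z ∈ C, r • z ∈ C) :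
    μ.toSphere ((↑) ⁻¹' C) = Module.finrank ℝ E * μ (ball 0 1 ∩ C) := by
  rw [μ.toSphere_apply' (measurable_subtype_coe hC)]
  congr 2
  ext z
  simp only [Set.mem_smul, Set.mem_image, Set.mem_preimage, Set.mem_inter_iff,
    mem_ball_zero_iff]
  constructor
  · rintro ⟨r, ⟨hr0, hr1⟩, _, ⟨l, hl, rfl⟩, rfl⟩
    exact ⟨by simpa [norm_smul, abs_of_pos hr0] using hr1, hcone r hr0 l hl⟩
  · rintro ⟨hz1, hzC⟩
    have hz : z ≠ 0 := fun h => h0 (h ▸ hzC)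
    refine ⟨‖z‖, ⟨norm_pos_iff.2 hz, hz1⟩, ‖z‖⁻¹ • z, ⟨⟨‖z‖⁻¹ • z, ?_⟩, ?_, rfl⟩, ?_⟩
    · simp [norm_smul, hz]
    · exact hcone _ (inv_pos.2 (norm_pos_iff.2 hz)) z hzC
    · exact smul_inv_smul₀ (norm_ne_zero_iff.2 hz) z

theorem measurePreserving_unitSphereHomeomorph {μ : Measure E} {g : E ≃ₗᵢ[ℝ] E}
    (hg : MeasurePreserving g μ μ) :
    MeasurePreserving (unitSphereHomeomorph g) μ.toSphere μ.toSphere := by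
  have hm := (unitSphereHomeomorph g).continuous.measurable
  refine ⟨hm, Measure.ext fun s hs => ?_⟩
  have himage : g '' (Set.Ioo (0 : ℝ) 1 • ((↑) '' (unitSphereHomeomorph g ⁻¹' s)))
      = Set.Ioo (0 : ℝ) 1 • ((↑) '' s) := by
    rw [← Set.image2_smul, Set.image_image2_distrib_right (map_smul g), Set.image2_smul,
      Set.image_image]
    simp_rw [← coe_unitSphereHomeomorph]
    rw [← Set.image_image (fun l : sphere (0 : E) 1 => (l : E)),
      Set.image_preimage_eq s (unitSphereHomeomorph g).surjective]
  rw [Measure.map_apply hm hs, μ.toSphere_apply' hs, μ.toSphere_apply' (hm hs), ← himage,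
    ← hg.measure_preimage_emb g.toHomeomorph.measurableEmbedding (g '' _),
    Set.preimage_image_eq _ g.injective]

end ToSphere

section FunkHecke

variable {E : Type*} [NormedAddCommGroup E] [InnerProductSpace ℝ E] [FiniteDimensional ℝ E]
  [MeasurableSpace E] [BorelSpace E]

/-- The degree one case of the Funk–Hecke formula: the reflection in the line `ℝ ∙ b` preserves
`⟪b, ·⟫` and averages `⟪a, ·⟫` to `⟪a, b⟫ * ⟪b, ·⟫`. -/
theorem integral_inner_mul_comp_inner_toSphere (a : E) {b : E} (hb : ‖b‖ = 1) {f : ℝ → ℝ}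
    (hf : Integrable (fun l : sphere (0 : E) 1 => f ⟪b, l⟫) volume.toSphere) :
    ∫ l : sphere (0 : E) 1, ⟪a, l⟫ * f ⟪b, l⟫ ∂volume.toSphere
      = ⟪a, b⟫ * ∫ l : sphere (0 : E) 1, ⟪b, l⟫ * f ⟪b, l⟫ ∂volume.toSphere := by
  set σ : Measure (sphere (0 : E) 1) := volume.toSphere
  set R : E ≃ₗᵢ[ℝ] E := (ℝ ∙ b).reflection
  have hRb : R b = b :=
    Submodule.reflection_mem_subspace_eq_self (Submodule.mem_span_singleton_self b)
  have hbR (z : E) : ⟪b, R z⟫ = ⟪b, z⟫ := by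
    rw [← R.inner_map_map b z, hRb]
  have haR (z : E) : ⟪a, z⟫ + ⟪a, R z⟫ = 2 * (⟪a, b⟫ * ⟪b, z⟫) := by
    have hRz : R z = (2 * ⟪b, z⟫) • b - z := by
      simp [R, Submodule.reflection_singleton_apply, hb, two_mul, two_smul, add_smul]
    rw [hRz, inner_sub_right, inner_smul_right]
    ring
  have hσ : MeasurePreserving (unitSphereHomeomorph R) σ σ :=
    measurePreserving_unitSphereHomeomorph R.measurePreserving
  have hRemb := (unitSphereHomeomorph R).measurableEmbedding
  have hint : Integrable (fun l : sphere (0 : E) 1 => ⟪a, l⟫ * f ⟪b, l⟫) σ :=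
    hf.bdd_mul (c := ‖a‖) (by fun_prop) (.of_forall fun l => by
      simpa using norm_inner_le_norm (𝕜 := ℝ) a (l : E))
  have hintR : Integrable (fun l : sphere (0 : E) 1 => ⟪a, R l⟫ * f ⟪b, l⟫) σ := by
    simpa [Function.comp_def, hbR] using (hσ.integrable_comp_emb hRemb).2 hint
  have hreflect : ∫ l : sphere (0 : E) 1, ⟪a, R l⟫ * f ⟪b, l⟫ ∂σ
      = ∫ l : sphere (0 : E) 1, ⟪a, l⟫ * f ⟪b, l⟫ ∂σ := by
    simpa [hbR] using hσ.integral_comp hRemb fun l : sphere (0 : E) 1 => ⟪a, l⟫ * f ⟪b, l⟫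
  refine mul_left_cancel₀ two_ne_zero ?_
  calc 2 * ∫ l : sphere (0 : E) 1, ⟪a, l⟫ * f ⟪b, l⟫ ∂σ
      = ∫ l : sphere (0 : E) 1, (⟪a, l⟫ * f ⟪b, l⟫ + ⟪a, R l⟫ * f ⟪b, l⟫) ∂σ := by
        rw [integral_add hint hintR, hreflect, two_mul]
    _ = ∫ l : sphere (0 : E) 1, 2 * (⟪a, b⟫ * (⟪b, l⟫ * f ⟪b, l⟫)) ∂σ := by
        simp only [← add_mul, haR, mul_assoc]
    _ = 2 * (⟪a, b⟫ * ∫ l : sphere (0 : E) 1, ⟪b, l⟫ * f ⟪b, l⟫ ∂σ) := by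
        rw [integral_const_mul, integral_const_mul]

end FunkHecke

section HatBox

lemma exists_orthonormalBasis_apply_zero_eq {E : Type*} [NormedAddCommGroup E]
    [InnerProductSpace ℝ E] [FiniteDimensional ℝ E] {n : ℕ} (hn : Module.finrank ℝ E = n + 1)
    {a : E} (ha : ‖a‖ = 1) : ∃ e : OrthonormalBasis (Fin (n + 1)) ℝ E, e 0 = a := by
  have hsingle : Orthonormal ℝ (({0} : Set (Fin (n + 1))).domRestrict fun _ => a) :=
    ⟨fun _ => ha, fun i j hij => (hij (Subsingleton.elim i j)).elim⟩
  obtain ⟨e, he⟩ := hsingle.exists_orthonormalBasis_extension_of_card_eq (by simp [hn])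
  exact ⟨e, he 0 rfl⟩

lemma measurePreserving_head_tail (n : ℕ) :
    MeasurePreserving fun z : EuclideanSpace ℝ (Fin (n + 1)) =>
      (z 0, WithLp.toLp 2 (Fin.tail z.ofLp)) :=
  (((MeasurePreserving.id (volume : Measure ℝ)).prod
    (PiLp.volume_preserving_toLp (Fin n))).comp
      (volume_preserving_piFinSuccAbove (fun _ : Fin (n + 1) => ℝ) 0)).comp
      (PiLp.volume_preserving_ofLp (Fin (n + 1)))

lemma norm_sq_eq_head_sq_add_norm_tail_sq {n : ℕ} (z : EuclideanSpace ℝ (Fin (n + 1))) :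
    ‖z‖ ^ 2 = z 0 ^ 2 + ‖WithLp.toLp 2 (Fin.tail z.ofLp)‖ ^ 2 := by
  simp [EuclideanSpace.real_norm_sq_eq, Fin.sum_univ_succ, Fin.tail]

lemma volume_ball_sdiff_closedBall_fin_two {r R : ℝ} (hr : 0 ≤ r) (hrR : r < R) :
    volume (ball (0 : EuclideanSpace ℝ (Fin 2)) R \ closedBall 0 r)
      = ENNReal.ofReal (Real.pi * (R ^ 2 - r ^ 2)) := by
  rw [measure_sdiff (closedBall_subset_ball hrR) measurableSet_closedBall.nullMeasurableSet
    measure_closedBall_lt_top.ne, EuclideanSpace.volume_ball_fin_two,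
    EuclideanSpace.volume_closedBall_fin_two, ← ENNReal.ofReal_pow (hr.trans hrR.le),
    ← ENNReal.ofReal_pow hr, ← ENNReal.ofReal_mul (sq_nonneg _), ← ENNReal.ofReal_mul (sq_nonneg _),
    ← ENNReal.ofReal_sub _ (by positivity)]
  congr 1
  ring

/-- The slice at height `u` of the part of the unit ball of `ℝ × ℝ²` outside a double cone. -/
lemma volume_slice {t : ℝ} (ht : 0 < t) (ht1 : t ≤ 1) (u : ℝ) :
    volume {y : EuclideanSpace ℝ (Fin 2) |
      u ^ 2 + ‖y‖ ^ 2 < 1 ∧ u ^ 2 < t ^ 2 * (u ^ 2 + ‖y‖ ^ 2)}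
      = ENNReal.ofReal (Real.pi * (1 - u ^ 2 / t ^ 2)) := by
  have ht2 : 0 < t ^ 2 := by positivity
  have ht2' : t ^ 2 ≤ 1 := pow_le_one₀ ht.le ht1
  rcases lt_or_ge (u ^ 2) (t ^ 2) with hu | hu
  · have hq : u ^ 2 / t ^ 2 < 1 := (div_lt_one ht2).2 hu
    have hr : 0 ≤ u ^ 2 / t ^ 2 - u ^ 2 := sub_nonneg.2 (le_div_self (sq_nonneg u) ht2 ht2')
    have hannulus : {y : EuclideanSpace ℝ (Fin 2) |
        u ^ 2 + ‖y‖ ^ 2 < 1 ∧ u ^ 2 < t ^ 2 * (u ^ 2 + ‖y‖ ^ 2)}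
        = ball 0 (√(1 - u ^ 2)) \ closedBall 0 (√(u ^ 2 / t ^ 2 - u ^ 2)) := by
      ext y
      rw [Set.mem_ofPred_eq, Set.mem_sdiff, mem_ball_zero_iff, mem_closedBall_zero_iff, not_le,
        Real.lt_sqrt (norm_nonneg y), Real.sqrt_lt hr (norm_nonneg y), lt_sub_iff_add_lt',
        sub_lt_iff_lt_add', div_lt_iff₀' ht2]
    rw [hannulus, volume_ball_sdiff_closedBall_fin_two (Real.sqrt_nonneg _)
      (Real.sqrt_lt_sqrt hr (by linarith)), Real.sq_sqrt hr, Real.sq_sqrt (by linarith),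
      sub_sub_sub_cancel_right]
  · have hq : 1 ≤ u ^ 2 / t ^ 2 := (one_le_div ht2).2 hu
    rw [ENNReal.ofReal_of_nonpos
      (mul_nonpos_of_nonneg_of_nonpos Real.pi_pos.le (sub_nonpos.2 hq))]
    convert measure_empty (μ := volume)
    refine Set.eq_empty_of_forall_notMem fun y hy => ?_
    nlinarith [hy.1, hy.2]

lemma lintegral_one_sub_sq_div_sq {t : ℝ} (ht : 0 < t) :
    ∫⁻ u : ℝ, ENNReal.ofReal (Real.pi * (1 - u ^ 2 / t ^ 2))
      = ENNReal.ofReal (4 * Real.pi / 3 * t) := by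
  have ht2 : 0 < t ^ 2 := by positivity
  have hsupp : Function.support (fun u : ℝ => ENNReal.ofReal (Real.pi * (1 - u ^ 2 / t ^ 2)))
      ⊆ Set.Ioc (-t) t := by
    intro u hu
    rw [Function.mem_support, ne_eq, ENNReal.ofReal_eq_zero, not_le,
      mul_pos_iff_of_pos_left Real.pi_pos, sub_pos, div_lt_one ht2] at hu
    exact Set.Ioo_subset_Ioc_self (abs_lt.1 (abs_lt_of_sq_lt_sq hu ht.le))
  have hnonneg : 0 ≤ᵐ[volume.restrict (Set.Ioc (-t) t)]
      fun u : ℝ => Real.pi * (1 - u ^ 2 / t ^ 2) := by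
    filter_upwards [ae_restrict_mem measurableSet_Ioc] with u hu
    exact mul_nonneg Real.pi_pos.le
      (sub_nonneg.2 ((div_le_one ht2).2 (sq_le_sq' hu.1.le hu.2)))
  have hcont : Continuous fun u : ℝ => Real.pi * (1 - u ^ 2 / t ^ 2) := by fun_prop
  rw [← setLIntegral_eq_of_support_subset hsupp,
    ← ofReal_integral_eq_lintegral_ofReal hcont.integrableOn_Ioc hnonneg,
    ← intervalIntegral.integral_of_le (by linarith), intervalIntegral.integral_const_mul,
    intervalIntegral.integral_sub (by simp) (Continuous.intervalIntegrable (by fun_prop) _ _),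
    intervalIntegral.integral_div, integral_pow]
  congr 1
  simp only [intervalIntegral.integral_const, smul_eq_mul]
  field_simp
  ring

lemma volume_ball_inter_abs_head_lt {t : ℝ} (ht : 0 < t) (ht1 : t ≤ 1) :
    volume (ball 0 1 ∩ {z : EuclideanSpace ℝ (Fin 3) | |z 0| < t * ‖z‖})
      = ENNReal.ofReal (4 * Real.pi / 3 * t) := by
  set S : Set (ℝ × EuclideanSpace ℝ (Fin 2)) :=
    {w | w.1 ^ 2 + ‖w.2‖ ^ 2 < 1 ∧ w.1 ^ 2 < t ^ 2 * (w.1 ^ 2 + ‖w.2‖ ^ 2)}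
  have hS : MeasurableSet S := by
    simp only [S, Set.ofPred_and]
    exact (measurableSet_lt (by fun_prop) (by fun_prop)).inter
      (measurableSet_lt (by fun_prop) (by fun_prop))
  have hpreimage : ball 0 1 ∩ {z : EuclideanSpace ℝ (Fin 3) | |z 0| < t * ‖z‖}
      = (fun z => (z 0, WithLp.toLp 2 (Fin.tail z.ofLp))) ⁻¹' S := by
    ext z
    simp only [S, Set.mem_inter_iff, Set.mem_preimage, Set.mem_ofPred_eq, mem_ball_zero_iff,
      ← norm_sq_eq_head_sq_add_norm_tail_sq, ← mul_pow, sq_lt_one_iff₀ (norm_nonneg z), sq_lt_sq,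
      abs_of_nonneg (mul_nonneg ht.le (norm_nonneg z))]
  rw [hpreimage, (measurePreserving_head_tail 2).measure_preimage hS.nullMeasurableSet,
    Measure.volume_eq_prod, Measure.prod_apply hS]
  simp only [S, Set.preimage_ofPred_eq, volume_slice ht ht1, lintegral_one_sub_sq_div_sq ht]

variable {E : Type*} [NormedAddCommGroup E] [InnerProductSpace ℝ E] [FiniteDimensional ℝ E]
  [MeasurableSpace E] [BorelSpace E] {a : E} {t : ℝ}

lemma volume_ball_inter_abs_inner_lt (hE : Module.finrank ℝ E = 3) (ha : ‖a‖ = 1) (ht : 0 < t)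
    (ht1 : t ≤ 1) :
    volume (ball 0 1 ∩ {z : E | |⟪a, z⟫| < t * ‖z‖}) = ENNReal.ofReal (4 * Real.pi / 3 * t) := by
  obtain ⟨e, rfl⟩ := exists_orthonormalBasis_apply_zero_eq hE ha
  rw [← volume_ball_inter_abs_head_lt ht ht1, ← e.measurePreserving_repr.measure_preimage_emb
    e.repr.toHomeomorph.measurableEmbedding]
  congr 1
  ext z
  simp [OrthonormalBasis.repr_apply_apply]

/-- Archimedes' hat-box theorem. -/
theorem toSphere_abs_inner_lt (hE : Module.finrank ℝ E = 3) (ha : ‖a‖ = 1) (ht : 0 < t)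
    (ht1 : t ≤ 1) :
    volume.toSphere {l : sphere (0 : E) 1 | |⟪a, l⟫| < t} = ENNReal.ofReal (4 * Real.pi * t) := by
  set C : Set E := {z | |⟪a, z⟫| < t * ‖z‖}
  have hC : MeasurableSet C := measurableSet_lt (by fun_prop) (by fun_prop)
  have hcone (r : ℝ) (hr : 0 < r) (z : E) (hz : z ∈ C) : r • z ∈ C := by
    simpa [C, inner_smul_right, norm_smul, abs_mul, abs_of_pos hr, mul_left_comm t r, hr] using hz
  have hpreimage : {l : sphere (0 : E) 1 | |⟪a, l⟫| < t} = (↑) ⁻¹' C := by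
    ext l
    simp [C]
  rw [hpreimage, toSphere_preimage_coe_of_cone _ hC (by simp [C]) hcone,
    volume_ball_inter_abs_inner_lt hE ha ht ht1, hE, ← ENNReal.ofReal_natCast,
    ← ENNReal.ofReal_mul (Nat.cast_nonneg 3)]
  congr 1
  push_cast
  ring

end HatBox

section Sgn

lemma measurable_sgn : Measurable sgn :=
  Measurable.ite measurableSet_Ici measurable_const measurable_const

lemma sgn_eq_one_or_neg_one (x : ℝ) : sgn x = 1 ∨ sgn x = -1 := by
  unfold sgn
  split_ifs <;> simp

lemma sgn_neg {x : ℝ} (hx : x ≠ 0) : sgn (-x) = -sgn x := by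
  rcases hx.lt_or_gt with h | h <;> simp [sgn, h.le, h.not_ge]

lemma mul_sgn_self (x : ℝ) : x * sgn x = |x| := by
  rcases lt_or_ge x 0 with h | h
  · simp [sgn, h.not_ge, abs_of_neg h]
  · simp [sgn, h, abs_of_nonneg h]

lemma abs_mul_sgn (x : ℝ) : |x| * sgn x = x := by
  rcases lt_or_ge x 0 with h | h
  · simp [sgn, h.not_ge, abs_of_neg h]
  · simp [sgn, h, abs_of_nonneg h]

lemma sgn_neg_one_pow_mul {x : ℝ} (hx : x ≠ 0) (i : Bool) :
    sgn ((-1) ^ i.toNat * x) = (-1) ^ i.toNat * sgn x := by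
  cases i <;> simp [sgn_neg hx]

end Sgn

section UniformSphere

instance : IsProbabilityMeasure uniformSphere where
  measure_univ := by
    have hσ : sphereMeasure Set.univ = ENNReal.ofReal (4 * Real.pi) := by
      rw [sphereMeasure, Measure.toSphere_apply_univ, EuclideanSpace.volume_ball_fin_three,
        finrank_euclideanSpace_fin, ENNReal.ofReal_one, one_pow, one_mul,
        ← ENNReal.ofReal_natCast, ← ENNReal.ofReal_mul (Nat.cast_nonneg 3)]
      congr 1
      push_cast
      ring
    rw [uniformSphere, Measure.smul_apply, hσ, smul_eq_mul,
      ENNReal.inv_mul_cancel (by simp [Real.pi_pos]) ENNReal.ofReal_ne_top]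

variable {a b : EuclideanSpace ℝ (Fin 3)}

theorem map_abs_inner_uniformSphere (ha : ‖a‖ = 1) :
    uniformSphere.map (fun l : Sphere2 => |⟪a, l⟫|) = volume.restrict (Set.Ico 0 1) := by
  have hm : Measurable (fun l : Sphere2 => |⟪a, l⟫|) := by fun_prop
  have := Measure.isProbabilityMeasure_map (μ := uniformSphere) hm.aemeasurable
  refine eq_restrict_Ico_of_Iio fun t ht => ?_
  rw [Measure.map_apply hm measurableSet_Iio]
  change uniformSphere {l : Sphere2 | |⟪a, l⟫| < t} = _
  rcases ht.1.eq_or_lt with rfl | ht0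
  · simp [(abs_nonneg _).not_gt]
  · rw [uniformSphere, sphereMeasure, Measure.smul_apply,
      toSphere_abs_inner_lt finrank_euclideanSpace_fin ha ht0 ht.2,
      ENNReal.ofReal_mul (p := 4 * Real.pi) (by positivity), smul_eq_mul, ← mul_assoc,
      ENNReal.inv_mul_cancel (by simp [Real.pi_pos]) ENNReal.ofReal_ne_top, one_mul]

lemma ae_inner_ne_zero (ha : ‖a‖ = 1) : ∀ᵐ l : Sphere2 ∂uniformSphere, ⟪a, l⟫ ≠ 0 := by
  have hm : Measurable (fun l : Sphere2 => |⟪a, l⟫|) := by fun_prop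
  have hne : ∀ᵐ x ∂uniformSphere.map (fun l : Sphere2 => |⟪a, l⟫|), x ≠ 0 := by
    rw [map_abs_inner_uniformSphere ha]
    exact Measure.ae_ne _ 0
  simpa using ae_of_ae_map hm.aemeasurable hne

lemma integral_abs_inner_uniformSphere (ha : ‖a‖ = 1) :
    ∫ l : Sphere2, |⟪a, l⟫| ∂uniformSphere = 1 / 2 := by
  have hm : Measurable (fun l : Sphere2 => |⟪a, l⟫|) := by fun_prop
  rw [← integral_map (f := fun x : ℝ => x) hm.aemeasurable (by fun_prop),
    map_abs_inner_uniformSphere ha, integral_Ico_eq_integral_Ioc,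
    ← intervalIntegral.integral_of_le zero_le_one, integral_id]
  norm_num

theorem integral_inner_mul_sgn_inner_uniformSphere (a : EuclideanSpace ℝ (Fin 3)) (hb : ‖b‖ = 1) :
    ∫ l : Sphere2, ⟪a, l⟫ * sgn ⟪b, l⟫ ∂uniformSphere = ⟪a, b⟫ / 2 := by
  have hint : Integrable (fun l : Sphere2 => sgn ⟪b, l⟫)
      (volume : Measure (EuclideanSpace ℝ (Fin 3))).toSphere :=
    .of_bound (measurable_sgn.comp (by fun_prop)).aestronglyMeasurable 1 (.of_forall fun l => by
      rcases sgn_eq_one_or_neg_one ⟪b, l⟫ with h | h <;> simp [h])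
  have hfunkHecke : ∫ l : Sphere2, ⟪a, l⟫ * sgn ⟪b, l⟫ ∂uniformSphere
      = ⟪a, b⟫ * ∫ l : Sphere2, ⟪b, l⟫ * sgn ⟪b, l⟫ ∂uniformSphere := by
    rw [uniformSphere, sphereMeasure, integral_smul_measure, integral_smul_measure,
      integral_inner_mul_comp_inner_toSphere a hb hint, mul_smul_comm]
  simp_rw [hfunkHecke, mul_sgn_self]
  rw [integral_abs_inner_uniformSphere hb, mul_one_div]

end UniformSphere

section Protocol

variable {a b : EuclideanSpace ℝ (Fin 3)}

lemma lamX_eq_choiceMethod (a : EuclideanSpace ℝ (Fin 3)) (p : Sphere2 × Sphere2) :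
    lamX a p = choiceMethod (fun l : Sphere2 => |⟪a, l⟫|) p := by
  unfold lamX boxX choiceMethod
  split_ifs <;> simp_all

theorem integral_comp_lamX (ha : ‖a‖ = 1) {s : EuclideanSpace ℝ (Fin 3) → ℝ} (hs : Measurable s) :
    ∫ p, s (lamX a p) ∂uniformSphere.prod uniformSphere
      = 2 * ∫ l : Sphere2, |⟪a, l⟫| * s l ∂uniformSphere := by
  have hm : Measurable (fun l : Sphere2 => |⟪a, l⟫|) := by fun_prop
  have hs' : Measurable fun l : Sphere2 => s l := hs.comp measurable_subtype_coe
  simp_rw [lamX_eq_choiceMethod]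
  rw [← integral_map (f := fun l : Sphere2 => s l) (measurable_choiceMethod hm).aemeasurable
      hs'.aestronglyMeasurable,
    map_choiceMethod_prod_of_uniform hm (map_abs_inner_uniformSphere ha),
    integral_withDensity_eq_integral_toReal_smul (by fun_prop)
      (.of_forall fun _ => ENNReal.ofReal_lt_top), ← integral_const_mul]
  refine integral_congr_ae (.of_forall fun l => ?_)
  simp [mul_assoc]

theorem integral_sgn_inner_lamX_mul_sgn_inner_lamX (ha : ‖a‖ = 1) (hb : ‖b‖ = 1) :
    ∫ p, sgn ⟪a, lamX a p⟫ * sgn ⟪b, lamX a p⟫ ∂uniformSphere.prod uniformSphere = ⟪a, b⟫ := by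
  rw [integral_comp_lamX ha (s := fun v => sgn ⟪a, v⟫ * sgn ⟪b, v⟫)
    ((measurable_sgn.comp (by fun_prop)).mul (measurable_sgn.comp (by fun_prop)))]
  simp_rw [← mul_assoc, abs_mul_sgn]
  rw [integral_inner_mul_sgn_inner_uniformSphere a hb, mul_div_cancel₀ _ two_ne_zero]

lemma measurable_boxX (a : EuclideanSpace ℝ (Fin 3)) : Measurable (boxX a) :=
  Measurable.ite (measurableSet_le (by fun_prop) (by fun_prop)) measurable_const measurable_const

lemma measurable_boxY (b : EuclideanSpace ℝ (Fin 3)) : Measurable (boxY b) :=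
  Measurable.ite (measurableSet_eq_fun (measurable_sgn.comp (by fun_prop))
    (measurable_sgn.comp (by fun_prop))) measurable_const measurable_const

lemma measurable_lamX (a : EuclideanSpace ℝ (Fin 3)) : Measurable (lamX a) :=
  Measurable.ite (measurable_boxX a (measurableSet_singleton true)) (by fun_prop) (by fun_prop)

lemma measurable_outA (a : EuclideanSpace ℝ (Fin 3)) : Measurable (outA a) := by
  have hsign : Measurable fun γ : Bool => (-1 : ℝ) ^ γ.toNat := .of_discrete
  exact (measurable_sgn.comp (Measurable.const_inner
    ((hsign.comp measurable_snd).smul ((measurable_lamX a).comp measurable_fst)))).neg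

lemma measurable_outB (a b : EuclideanSpace ℝ (Fin 3)) : Measurable (outB a b) := by
  have hsign : Measurable fun z : Bool × Bool × Bool =>
      (-1 : ℝ) ^ (xor z.1 (z.2.1 && z.2.2)).toNat := .of_discrete
  exact measurable_sgn.comp (Measurable.const_inner ((hsign.comp (measurable_snd.prodMk
    (((measurable_boxX a).comp measurable_fst).prodMk
      ((measurable_boxY b).comp measurable_fst)))).smul (by fun_prop)))

lemma outA_eq_one_or_neg_one (a : EuclideanSpace ℝ (Fin 3)) (q : (Sphere2 × Sphere2) × Bool) :
    outA a q = 1 ∨ outA a q = -1 := by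
  simpa [outA, neg_eq_iff_eq_neg, or_comm] using sgn_eq_one_or_neg_one _

lemma outB_eq_one_or_neg_one (a b : EuclideanSpace ℝ (Fin 3)) (q : (Sphere2 × Sphere2) × Bool) :
    outB a b q = 1 ∨ outB a b q = -1 :=
  sgn_eq_one_or_neg_one _

lemma neg_one_pow_boxY_mul_sgn_inner_fst (b : EuclideanSpace ℝ (Fin 3)) (p : Sphere2 × Sphere2) :
    (-1) ^ (boxY b p).toNat * sgn ⟪b, p.1⟫ = sgn ⟪b, p.2⟫ := by
  rcases sgn_eq_one_or_neg_one ⟪b, p.1⟫ with h1 | h1 <;>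
  rcases sgn_eq_one_or_neg_one ⟪b, p.2⟫ with h2 | h2 <;>
  norm_num [boxY, h1, h2]

lemma neg_one_pow_boxX_and_boxY_mul_sgn_inner_fst (a b : EuclideanSpace ℝ (Fin 3))
    (p : Sphere2 × Sphere2) :
    (-1) ^ (boxX a p && boxY b p).toNat * sgn ⟪b, p.1⟫ = sgn ⟪b, lamX a p⟫ := by
  cases hx : boxX a p
  · simp [lamX, hx]
  · simp [lamX, hx, neg_one_pow_boxY_mul_sgn_inner_fst]

lemma outA_eq {p : Sphere2 × Sphere2} (h1 : ⟪a, p.1⟫ ≠ 0) (h2 : ⟪a, p.2⟫ ≠ 0) (γ : Bool) :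
    outA a (p, γ) = -((-1) ^ γ.toNat * sgn ⟪a, lamX a p⟫) := by
  have hne : ⟪a, lamX a p⟫ ≠ 0 := by
    unfold lamX
    split_ifs <;> assumption
  rw [outA, inner_smul_right, sgn_neg_one_pow_mul hne]

lemma outB_eq (a : EuclideanSpace ℝ (Fin 3)) {p : Sphere2 × Sphere2} (h : ⟪b, p.1⟫ ≠ 0)
    (γ : Bool) : outB a b (p, γ) = (-1) ^ γ.toNat * sgn ⟪b, lamX a p⟫ := by
  have hxor (i j : Bool) : (-1 : ℝ) ^ (xor i j).toNat = (-1) ^ i.toNat * (-1) ^ j.toNat := by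
    cases i <;> cases j <;> simp
  rw [outB, inner_smul_right, sgn_neg_one_pow_mul h, hxor, mul_assoc,
    neg_one_pow_boxX_and_boxY_mul_sgn_inner_fst]

instance : IsProbabilityMeasure coin :=
  inferInstanceAs (IsProbabilityMeasure (PMF.toMeasure _))

instance : IsProbabilityMeasure nlMeasure :=
  inferInstanceAs (IsProbabilityMeasure (Measure.prod _ _))

lemma integral_neg_one_pow_coin : ∫ γ, (-1 : ℝ) ^ γ.toNat ∂coin = 0 := by
  simp [coin, PMF.integral_eq_sum]

lemma outA_ae_eq (ha : ‖a‖ = 1) :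
    outA a =ᵐ[nlMeasure] fun q => -((-1) ^ q.2.toNat * sgn ⟪a, lamX a q.1⟫) := by
  have hp : ∀ᵐ p ∂uniformSphere.prod uniformSphere, ⟪a, p.1⟫ ≠ 0 ∧ ⟪a, p.2⟫ ≠ 0 :=
    (Measure.quasiMeasurePreserving_fst.ae (ae_inner_ne_zero ha)).and
      (Measure.quasiMeasurePreserving_snd.ae (ae_inner_ne_zero ha))
  filter_upwards [Measure.quasiMeasurePreserving_fst.ae hp] with q hq
  exact outA_eq hq.1 hq.2 q.2

lemma outB_ae_eq (a : EuclideanSpace ℝ (Fin 3)) (hb : ‖b‖ = 1) :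
    outB a b =ᵐ[nlMeasure] fun q => (-1) ^ q.2.toNat * sgn ⟪b, lamX a q.1⟫ := by
  have hp : ∀ᵐ p ∂uniformSphere.prod uniformSphere, ⟪b, p.1⟫ ≠ 0 :=
    Measure.quasiMeasurePreserving_fst.ae (ae_inner_ne_zero hb)
  filter_upwards [Measure.quasiMeasurePreserving_fst.ae hp] with q hq
  exact outB_eq a hq q.2

lemma integral_neg_one_pow_mul_nlMeasure (s : Sphere2 × Sphere2 → ℝ) :
    ∫ q, (-1) ^ q.2.toNat * s q.1 ∂nlMeasure = 0 := by
  simp_rw [mul_comm _ (s _)]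
  rw [nlMeasure, integral_prod_mul s fun γ : Bool => (-1) ^ γ.toNat, integral_neg_one_pow_coin,
    mul_zero]

theorem integral_outA (ha : ‖a‖ = 1) : ∫ q, outA a q ∂nlMeasure = 0 := by
  rw [integral_congr_ae (outA_ae_eq ha), integral_neg,
    integral_neg_one_pow_mul_nlMeasure fun p => sgn ⟪a, lamX a p⟫, neg_zero]

theorem integral_outB (a : EuclideanSpace ℝ (Fin 3)) (hb : ‖b‖ = 1) :
    ∫ q, outB a b q ∂nlMeasure = 0 := by
  rw [integral_congr_ae (outB_ae_eq a hb),
    integral_neg_one_pow_mul_nlMeasure fun p => sgn ⟪b, lamX a p⟫]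

theorem integral_outA_mul_outB (ha : ‖a‖ = 1) (hb : ‖b‖ = 1) :
    ∫ q, outA a q * outB a b q ∂nlMeasure = -⟪a, b⟫ := by
  have hAB : (fun q => outA a q * outB a b q)
      =ᵐ[nlMeasure] fun q => -(sgn ⟪a, lamX a q.1⟫ * sgn ⟪b, lamX a q.1⟫) := by
    filter_upwards [outA_ae_eq ha, outB_ae_eq a hb] with q hA hB
    rw [hA, hB]
    cases q.2 <;> simp
  rw [integral_congr_ae hAB, integral_neg, nlMeasure,
    integral_fun_fst fun p => sgn ⟪a, lamX a p⟫ * sgn ⟪b, lamX a p⟫,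
    integral_sgn_inner_lamX_mul_sgn_inner_lamX ha hb, probReal_univ, one_smul]

end Protocol

/-- **Correctness of the non-local box protocol.** Using shared uniform `λ₀, λ₁` on
`S²`, a uniform bit `γ`, and one use of a PR non-local box (`α = γ`,
`β = γ ⊕ (x ∧ y)`), the outputs `A, B` reproduce the singlet distribution:
`P(A = α', B = β') = (1 - α'β' a·b)/4` for all `α', β' ∈ {-1, 1}`; in particular
`E(AB) = -a·b` and `E(A) = E(B) = 0`. -/
theorem nonlocal_box_protocol_correct (a b : EuclideanSpace ℝ (Fin 3))
    (ha : ‖a‖ = 1) (hb : ‖b‖ = 1) :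
    (∀ α' β' : ℝ, (α' = 1 ∨ α' = -1) → (β' = 1 ∨ β' = -1) →
      nlMeasure {q | outA a q = α' ∧ outB a b q = β'}
        = ENNReal.ofReal ((1 - α' * β' * ⟪a, b⟫) / 4)) ∧
    (∫ q, outA a q * outB a b q ∂nlMeasure = -⟪a, b⟫) ∧
    (∫ q, outA a q ∂nlMeasure = 0) ∧
    (∫ q, outB a b q ∂nlMeasure = 0) := by
  have hA := integral_outA ha
  have hB := integral_outB a hb
  have hAB := integral_outA_mul_outB ha hb
  refine ⟨fun α β hα hβ => ?_, hAB, hA, hB⟩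
  rw [measure_setOf_eq_and_eq_of_sign (measurable_outA a) (measurable_outB a b)
    (outA_eq_one_or_neg_one a) (outB_eq_one_or_neg_one a b) hα hβ, hA, hB, hAB]
  congr 1
  ring
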